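/- For every ℝ-linear connection ∇ of L on E and every alternating ℝ-multilinear 1-form θ : L → End_C(E), the map ∇ + θ is again an ℝ-linear connection and cs_2(∇, ∇+θ) = Tr_*(2·θ∧R^∇ + θ∧d^{∇̄}θ + (2/3)·θ∧θ∧θ), where (d^{∇̄}θ)(a,b) = [∇_a, θ(b)] − [∇_b, θ(a)] − θ(⁅a,b⁆). -/

import Mathlib

open Module

/-- The trace over `C` of an `ℝ`-linear endomorphism of `E` whose underlying
function happens to be `C`-linear (and `0` otherwise). -/
noncomputable def trR (C : Type*) {E : Type*} [CommRing C] [AddCommGroup E]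
    [Module ℝ E] [Module C E] (e : E →ₗ[ℝ] E) : C :=
  letI := Classical.propDecidable
  if h : ∃ g : E →ₗ[C] E, ⇑g = ⇑e then LinearMap.trace C E h.choose else 0

/-- An ℝ-linear connection of the Lie algebra `L` (with anchor `ρ`) on the `C`-module `E`. -/
def IsConn {L C E : Type*} [LieRing L] [LieAlgebra ℝ L] [CommRing C] [Algebra ℝ C]
    [AddCommGroup E] [Module ℝ E] [Module C E]
    (ρ : L →ₗ[ℝ] Derivation ℝ C C) (D : L →ₗ[ℝ] Module.End ℝ E) : Prop :=
  ∀ (a : L) (f : C) (e : E), D a (f • e) = f • D a e + ρ a f • e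

/-- The curvature of an ℝ-linear map `D : L →ₗ[ℝ] End ℝ E`. -/
def curv {L E : Type*} [LieRing L] [LieAlgebra ℝ L] [AddCommGroup E] [Module ℝ E]
    (D : L →ₗ[ℝ] Module.End ℝ E) (a b : L) : Module.End ℝ E :=
  D a * D b - D b * D a - D ⁅a, b⁆

/-- The curvature as an `End ℝ E`-valued 2-form. -/
def curv2 {L E : Type*} [LieRing L] [LieAlgebra ℝ L] [AddCommGroup E] [Module ℝ E]
    (D : L →ₗ[ℝ] Module.End ℝ E) : (Fin 2 → L) → Module.End ℝ E :=
  fun a => curv D (a 0) (a 1)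

/-- The Chevalley–Eilenberg style differential of a `V`-valued `n`-form on `L`,
with respect to an action `act` of `L` on `V`:
`(dω)(a₁,…,a_{n+1}) = Σᵢ (−1)^{i+1} act(aᵢ)(ω(a₁,…,âᵢ,…)) +
  Σ_{i<j} (−1)^{i+j} ω(⁅aᵢ,aⱼ⁆, a₁,…,âᵢ,…,âⱼ,…)`. -/
def dGen {L V : Type*} [LieRing L] [AddCommGroup V] (act : L → V → V) :
    {n : ℕ} → ((Fin n → L) → V) → ((Fin (n + 1) → L) → V)
  | 0, ω, a => act (a 0) (ω Fin.elim0)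
  | (m + 1), ω, a =>
      (∑ i : Fin (m + 2), (-1 : ℤ) ^ (i : ℕ) • act (a i) (ω (fun k => a (i.succAbove k)))) +
      ∑ i : Fin (m + 2), ∑ j : Fin (m + 2),
        if h : (i : ℕ) < (j : ℕ) then
          (-1 : ℤ) ^ ((i : ℕ) + (j : ℕ)) • ω (Fin.cons ⁅a i, a j⁆
            (fun k : Fin m => a (j.succAbove
              ((⟨(i : ℕ), by have := j.isLt; omega⟩ : Fin (m + 1)).succAbove k))))
        else 0

/-- The differential `d_ρ` on `C`-valued ℝ-linear forms on `L`. -/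
def dRho {L C : Type*} [LieRing L] [LieAlgebra ℝ L] [CommRing C] [Algebra ℝ C]
    (ρ : L →ₗ[ℝ] Derivation ℝ C C) {n : ℕ} (ω : (Fin n → L) → C) :
    (Fin (n + 1) → L) → C :=
  dGen (fun a c => ρ a c) ω

/-- The differential `d^{∇̄}` on `End ℝ E`-valued ℝ-linear forms on `L`,
where `∇̄_a = [∇_a, ·]`. -/
def dEnd {L E : Type*} [LieRing L] [LieAlgebra ℝ L] [AddCommGroup E] [Module ℝ E]
    (D : L →ₗ[ℝ] Module.End ℝ E) {n : ℕ} (ω : (Fin n → L) → Module.End ℝ E) :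
    (Fin (n + 1) → L) → Module.End ℝ E :=
  dGen (fun a φ => D a * φ - φ * D a) ω

/-- The wedge product (with composition as multiplication of values) of
`End ℝ E`-valued forms:
`(ω∧η)(a₁,…,a_{m+n}) = (1/(m!·n!)) Σ_{τ} sgn τ · ω(a_{τ(1)},…) ∘ η(a_{τ(m+1)},…)`. -/
noncomputable def wedge {L E : Type*} [AddCommGroup E] [Module ℝ E] {m n : ℕ}
    (ω : (Fin m → L) → Module.End ℝ E) (η : (Fin n → L) → Module.End ℝ E) :
    (Fin (m + n) → L) → Module.End ℝ E :=
  fun a => ((m.factorial * n.factorial : ℝ))⁻¹ •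
    ∑ τ : Equiv.Perm (Fin (m + n)), ((Equiv.Perm.sign τ : ℤ) •
      (ω (fun i => a (τ (Fin.castAdd n i))) * η (fun j => a (τ (Fin.natAdd m j)))))

/-- The `p`-th wedge power of an `End ℝ E`-valued 2-form. -/
noncomputable def wpow {L E : Type*} [AddCommGroup E] [Module ℝ E]
    (R : (Fin 2 → L) → Module.End ℝ E) :
    (p : ℕ) → (Fin (2 * p) → L) → Module.End ℝ E
  | 0 => fun _ => 1
  | (p + 1) => fun a => wedge R (wpow R p) (fun i => a (Fin.cast (by omega) i))

/-- The `k`-th wedge power of an `End ℝ E`-valued 1-form. -/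
noncomputable def wpow1 {L E : Type*} [AddCommGroup E] [Module ℝ E]
    (θ : (Fin 1 → L) → Module.End ℝ E) :
    (k : ℕ) → (Fin k → L) → Module.End ℝ E
  | 0 => fun _ => 1
  | (k + 1) => fun a => wedge θ (wpow1 θ k) (fun i => a (Fin.cast (by omega) i))

/-- The Chern character form `ch_p(∇) = Tr_*((R^∇)^{∧p})`. -/
noncomputable def chp {L E : Type*} (C : Type*) [LieRing L] [LieAlgebra ℝ L]
    [CommRing C] [AddCommGroup E] [Module ℝ E] [Module C E]
    (D : L →ₗ[ℝ] Module.End ℝ E) (p : ℕ) : (Fin (2 * p) → L) → C :=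
  fun a => trR C (wpow (curv2 D) p a)

/-- `∫₀ˢ f(t) dt` for a function `f : ℝ → C` given by a polynomial with
coefficients in the ℝ-algebra `C` (and `0` if `f` is not polynomial). -/
noncomputable def intPolyTo {C : Type*} [CommRing C] [Algebra ℝ C] (s : ℝ) (f : ℝ → C) : C :=
  letI := Classical.propDecidable
  if h : ∃ P : Polynomial C, ∀ t : ℝ, f t = Polynomial.eval (algebraMap ℝ C t) P then
    ∑ k ∈ Finset.range (h.choose.natDegree + 1),
      (s ^ (k + 1) / ((k : ℝ) + 1)) • h.choose.coeff k
  else 0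

/-- The valuewise integral over the standard 2-simplex
`Δ² = {(t₁,t₂) : t₁ ≥ 0, t₂ ≥ 0, t₁ + t₂ ≤ 1}` of a `C`-valued polynomial function. -/
noncomputable def intSimplex2 {C : Type*} [CommRing C] [Algebra ℝ C] (f : ℝ → ℝ → C) : C :=
  intPolyTo 1 (fun t1 => intPolyTo (1 - t1) (fun t2 => f t1 t2))

/-- The Chern–Simons transgression form for a pair of ℝ-linear connections:
`cs_p(∇⁰,∇¹) = p·∫₀¹ Tr_*(λ ∧ (R_t)^{∧(p−1)}) dt` where `λ = ∇¹ − ∇⁰` and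
`R_t` is the curvature of `∇⁰ + t•λ`. -/
noncomputable def csPair {L E : Type*} (C : Type*) [LieRing L] [LieAlgebra ℝ L]
    [CommRing C] [Algebra ℝ C] [AddCommGroup E] [Module ℝ E] [Module C E]
    (D0 D1 : L →ₗ[ℝ] Module.End ℝ E) (p : ℕ) : (Fin (2 * (p - 1) + 1) → L) → C :=
  fun a => (p : ℝ) • intPolyTo 1 (fun t =>
    trR C (wedge (fun v : Fin 1 → L => (D1 - D0) (v 0))
      (wpow (curv2 (D0 + t • (D1 - D0))) (p - 1))
      (fun i => a (Fin.cast (by omega) i))))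

/-- The Chern–Simons transgression form for a triple of ℝ-linear connections:
`cs_p(∇⁰,∇¹,∇²) = −p(p−1)·∫_{Δ²} Tr_*(λ₁ ∧ λ₂ ∧ (R_{(t₁,t₂)})^{∧(p−2)}) dt₁dt₂`
where `λᵢ = ∇ⁱ − ∇⁰` and `R_{(t₁,t₂)}` is the curvature of `∇⁰ + t₁•λ₁ + t₂•λ₂`. -/
noncomputable def csTriple {L E : Type*} (C : Type*) [LieRing L] [LieAlgebra ℝ L]
    [CommRing C] [Algebra ℝ C] [AddCommGroup E] [Module ℝ E] [Module C E]
    (D0 D1 D2 : L →ₗ[ℝ] Module.End ℝ E) (p : ℕ) : (Fin (2 * (p - 2) + 2) → L) → C :=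
  fun a => (-((p : ℝ) * ((p : ℝ) - 1))) • intSimplex2 (fun t1 t2 =>
    trR C (wedge (fun v : Fin 1 → L => (D1 - D0) (v 0))
      (wedge (fun v : Fin 1 → L => (D2 - D0) (v 0))
        (wpow (curv2 (D0 + t1 • (D1 - D0) + t2 • (D2 - D0))) (p - 2)))
      (fun i => a (Fin.cast (by omega) i))))


/-- The ℝ-linear inclusion `End_C(E) → End_ℝ(E)`. -/
noncomputable def restrEndMap {C E : Type*} [CommRing C] [Algebra ℝ C] [AddCommGroup E]
    [Module ℝ E] [Module C E] [IsScalarTower ℝ C E] :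
    (E →ₗ[C] E) →ₗ[ℝ] Module.End ℝ E where
  toFun g := g.restrictScalars ℝ
  map_add' _ _ := rfl
  map_smul' _ _ := rfl

lemma wedge_add_right {L E : Type*} [AddCommGroup E] [Module ℝ E] {m n : ℕ}
    (ω : (Fin m → L) → Module.End ℝ E) (η η' : (Fin n → L) → Module.End ℝ E) (a) :
    wedge ω (fun u => η u + η' u) a = wedge ω η a + wedge ω η' a := by
  simp only [wedge, mul_add, smul_add, Finset.sum_add_distrib]

lemma wedge_smul_right {L E : Type*} [AddCommGroup E] [Module ℝ E] {m n : ℕ}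
    (ω : (Fin m → L) → Module.End ℝ E) (η : (Fin n → L) → Module.End ℝ E) (t : ℝ) (a) :
    wedge ω (fun u => t • η u) a = t • wedge ω η a := by
  simp only [wedge, mul_smul_comm, Finset.smul_sum]
  refine Finset.sum_congr rfl fun τ _ => ?_
  rw [smul_comm (_ : ℤ) t]
  exact smul_comm _ _ _

section
variable {C E : Type*} [CommRing C] [Algebra ℝ C] [AddCommGroup E]
    [Module ℝ E] [Module C E] [IsScalarTower ℝ C E]

lemma mem_of_smul (e : Module.End ℝ E) (h : ∀ (f : C) (x : E), e (f • x) = f • e x) :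
    e ∈ LinearMap.range (restrEndMap (C := C) (E := E)) :=
  ⟨{ toFun := e, map_add' := e.map_add, map_smul' := h }, rfl⟩

lemma trR_restr (g : E →ₗ[C] E) : trR C (restrEndMap g) = LinearMap.trace C E g := by
  have h : ∃ g' : E →ₗ[C] E, ⇑g' = ⇑(restrEndMap g) := ⟨g, rfl⟩
  unfold trR
  rw [dif_pos h]
  congr 1
  exact DFunLike.coe_injective h.choose_spec

lemma wedge_mem {L : Type*} {m n : ℕ}
    (ω : (Fin m → L) → Module.End ℝ E) (η : (Fin n → L) → Module.End ℝ E)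
    (h1 : ∀ u, ω u ∈ LinearMap.range (restrEndMap (C := C) (E := E)))
    (h2 : ∀ u, η u ∈ LinearMap.range (restrEndMap (C := C) (E := E))) (a) :
    wedge ω η a ∈ LinearMap.range (restrEndMap (C := C) (E := E)) := by
  unfold wedge
  refine Submodule.smul_mem _ _ (Submodule.sum_mem _ fun τ _ => zsmul_mem ?_ _)
  obtain ⟨g, hg⟩ := h1 (fun i => a (τ (Fin.castAdd n i)))
  obtain ⟨k, hk⟩ := h2 (fun j => a (τ (Fin.natAdd m j)))
  exact ⟨g * k, by rw [← hg, ← hk]; rfl⟩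

end

lemma poly_zero {C : Type*} [CommRing C] [Algebra ℝ C] (P : Polynomial C)
    (h : ∀ t : ℝ, Polynomial.eval (algebraMap ℝ C t) P = 0) : P = 0 := by
  ext k
  rw [Polynomial.coeff_zero, ← Module.forall_dual_apply_eq_zero_iff ℝ]
  intro φ
  let Q : Polynomial ℝ := ∑ i ∈ Finset.range (P.natDegree + 1), Polynomial.monomial i (φ (P.coeff i))
  have hQ : Q = 0 := by
    apply Polynomial.funext
    intro t
    have := congrArg φ (h t)
    rw [Polynomial.eval_eq_sum_range, map_sum, map_zero] at this
    rw [Polynomial.eval_zero, ← this, Polynomial.eval_finsetSum]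
    refine Finset.sum_congr rfl fun i _ => ?_
    rw [Polynomial.eval_monomial, ← map_pow, mul_comm (P.coeff i), ← Algebra.smul_def, map_smul,
      smul_eq_mul, mul_comm]
  have hk := congrArg (fun q => Polynomial.coeff q k) hQ
  simp only [Q, Polynomial.finsetSum_coeff, Polynomial.coeff_monomial, Polynomial.coeff_zero,
    Finset.sum_ite_eq', Finset.mem_range] at hk
  by_cases hlt : k < P.natDegree + 1
  · rwa [if_pos hlt] at hk
  · rw [Polynomial.coeff_eq_zero_of_natDegree_lt (by omega), map_zero]

lemma intPoly_quad {C : Type*} [CommRing C] [Algebra ℝ C] (x y z : C) (f : ℝ → C)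
    (hf : ∀ t, f t = x + t • y + t ^ 2 • z) :
    intPolyTo 1 f = x + (1 / 2 : ℝ) • y + (1 / 3 : ℝ) • z := by
  let P : Polynomial C := Polynomial.C x + Polynomial.C y * Polynomial.X
    + Polynomial.C z * Polynomial.X ^ 2
  have hP : ∀ t : ℝ, f t = Polynomial.eval (algebraMap ℝ C t) P := by
    intro t
    simp only [P, hf, Algebra.smul_def, map_pow, Polynomial.eval_add, Polynomial.eval_mul,
      Polynomial.eval_C, Polynomial.eval_X, Polynomial.eval_pow]
    ring
  have h : ∃ P : Polynomial C, ∀ t : ℝ, f t = Polynomial.eval (algebraMap ℝ C t) P := ⟨P, hP⟩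
  have hc : h.choose = P := by
    rw [← sub_eq_zero]
    apply poly_zero
    intro t
    rw [Polynomial.eval_sub, ← hP, ← h.choose_spec t, sub_self]
  unfold intPolyTo
  rw [dif_pos h, hc]
  have hd : P.natDegree + 1 ≤ 3 := by
    have : P.natDegree ≤ 2 := by
      simp only [P]
      compute_degree
    omega
  rw [Finset.sum_subset (Finset.range_mono hd)]
  · simp [Finset.sum_range_succ, P, Polynomial.coeff_X, Polynomial.coeff_C,
      Polynomial.coeff_X_pow]
    norm_num
  · intro k _ hk
    rw [Polynomial.coeff_eq_zero_of_natDegree_lt (by simpa using hk), smul_zero]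

lemma perm_two_sum {M : Type*} [AddCommGroup M] (F : Equiv.Perm (Fin 2) → M) :
    ∑ τ : Equiv.Perm (Fin 2), F τ = F 1 + F (Equiv.swap 0 1) := by
  have : (Finset.univ : Finset (Equiv.Perm (Fin 2))) = {1, Equiv.swap 0 1} := by decide
  rw [this, Finset.sum_pair (by decide)]

lemma wedge_one_one {L E : Type*} [AddCommGroup E] [Module ℝ E]
    (ω η : (Fin 1 → L) → Module.End ℝ E) (u : Fin 2 → L) :
    wedge ω η u = ω (fun _ => u 0) * η (fun _ => u 1) - ω (fun _ => u 1) * η (fun _ => u 0) := by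
  have e1 : ∀ i : Fin 1, Fin.castAdd 1 i = (0 : Fin 2) := by decide
  have e2 : ∀ i : Fin 1, Fin.natAdd 1 i = (1 : Fin 2) := by decide
  unfold wedge
  rw [perm_two_sum]
  simp only [e1, e2]
  simp [sub_eq_add_neg]

lemma wpow_one {L E : Type*} [LieRing L] [LieAlgebra ℝ L] [AddCommGroup E] [Module ℝ E]
    (D : L →ₗ[ℝ] Module.End ℝ E) : wpow (curv2 D) 1 = curv2 D := by
  funext u
  change wedge (n := 0) (curv2 D) (fun _ => 1) u = _
  unfold wedge
  have e1 : ∀ i : Fin 2, Fin.castAdd 0 i = i := fun _ => rfl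
  change _ • (∑ τ : Equiv.Perm (Fin 2), _) = _
  rw [perm_two_sum]
  have key : curv D (u 1) (u 0) = - curv D (u 0) (u 1) := by
    simp only [curv]
    rw [← lie_skew (u 0) (u 1), map_neg]
    abel
  simp [curv2, e1, key]
  rw [← two_smul ℝ, smul_smul]
  norm_num

lemma dEnd_one {L E : Type*} [LieRing L] [LieAlgebra ℝ L] [AddCommGroup E] [Module ℝ E]
    (D : L →ₗ[ℝ] Module.End ℝ E) (T : L → Module.End ℝ E) (u : Fin 2 → L) :
    dEnd D (fun w : Fin 1 → L => T (w 0)) u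
      = (D (u 0) * T (u 1) - T (u 1) * D (u 0)) - (D (u 1) * T (u 0) - T (u 0) * D (u 1))
        - T ⁅u 0, u 1⁆ := by
  simp [dEnd, dGen, Fin.sum_univ_two]
  abel

lemma curv_expand {L E : Type*} [LieRing L] [LieAlgebra ℝ L] [AddCommGroup E] [Module ℝ E]
    (D T : L →ₗ[ℝ] Module.End ℝ E) (t : ℝ) (u : Fin 2 → L) :
    curv2 (D + t • T) u = curv2 D u + t • dEnd D (fun w : Fin 1 → L => T (w 0)) u
      + t ^ 2 • wedge (fun w : Fin 1 → L => T (w 0)) (fun w : Fin 1 → L => T (w 0)) u := by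
  rw [wedge_one_one, dEnd_one D (fun a => T a)]
  simp only [curv2, curv, LinearMap.add_apply, LinearMap.smul_apply, mul_add, add_mul,
    smul_mul_assoc, mul_smul_comm, smul_add, smul_sub, smul_smul, pow_two]
  abel

/-- `∇ + θ` is an ℝ-linear connection for any `End_C(E)`-valued 1-form
`θ`, and `cs_2(∇, ∇+θ) = Tr_*(2·θ∧R^∇ + θ∧d^{∇̄}θ + (2/3)·θ∧θ∧θ)`. -/
theorem stmt17 {L : Type*} {C : Type*} {E : Type*}
    [LieRing L] [LieAlgebra ℝ L] [CommRing C] [Algebra ℝ C] [Module C L]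
    [AddCommGroup E] [Module ℝ E] [Module C E] [IsScalarTower ℝ C E]
    [Module.Finite C E] [Module.Free C E]
    (ρ : L →ₗ[ℝ] Derivation ℝ C C)
    (hρ : ∀ (a b : L) (f : C), ρ ⁅a, b⁆ f = ρ a (ρ b f) - ρ b (ρ a f))
    (hLeib : ∀ (a b : L) (f : C), ⁅a, f • b⁆ = f • ⁅a, b⁆ + ρ a f • b)
    (D : L →ₗ[ℝ] Module.End ℝ E) (hD : IsConn ρ D)
    (θ : L →ₗ[ℝ] (E →ₗ[C] E)) :
    IsConn ρ (D + restrEndMap.comp θ) ∧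
    ∀ v : Fin (2 * (2 - 1) + 1) → L,
      csPair C D (D + restrEndMap.comp θ) 2 v
        = trR C
            ((2 : ℝ) • wedge (fun u : Fin 1 → L => ((θ (u 0)).restrictScalars ℝ)) (curv2 D)
                (fun i => v (Fin.cast (by omega) i))
            + wedge (fun u : Fin 1 → L => ((θ (u 0)).restrictScalars ℝ))
                (dEnd D (fun u : Fin 1 → L => ((θ (u 0)).restrictScalars ℝ)))
                (fun i => v (Fin.cast (by omega) i))
            + (2 / 3 : ℝ) • wedge (fun u : Fin 1 → L => ((θ (u 0)).restrictScalars ℝ))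
                (wedge (fun u : Fin 1 → L => ((θ (u 0)).restrictScalars ℝ))
                  (fun u : Fin 1 → L => ((θ (u 0)).restrictScalars ℝ)))
                (fun i => v (Fin.cast (by omega) i))) := by
  have hθ : ∀ a (f : C) (e : E), θ a (f • e) = f • θ a e := fun a f e => map_smul _ _ _
  refine ⟨fun a f e => ?_, fun v => ?_⟩
  · change D a (f • e) + θ a (f • e) = f • (D a e + θ a e) + _
    rw [hD, hθ, smul_add]
    abel
  set T : L →ₗ[ℝ] Module.End ℝ E := restrEndMap.comp θ with hT
  have hTs : ∀ a (f : C) (e : E), T a (f • e) = f • T a e := hθ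
  have hTm : ∀ u : Fin 1 → L, T (u 0) ∈ LinearMap.range (restrEndMap (C := C) (E := E)) :=
    fun u => ⟨θ (u 0), rfl⟩
  have hR : ∀ u, curv2 D u ∈ LinearMap.range (restrEndMap (C := C) (E := E)) := by
    intro u
    apply mem_of_smul
    intro f x
    simp only [curv2, curv, LinearMap.sub_apply, Module.End.mul_apply, map_add, hD _ _ _, hρ,
      smul_sub, sub_smul]
    abel
  have hd : ∀ u, dEnd D (fun w : Fin 1 → L => T (w 0)) u
      ∈ LinearMap.range (restrEndMap (C := C) (E := E)) := by
    intro u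
    rw [dEnd_one D (fun a => T a)]
    apply mem_of_smul
    intro f x
    simp only [LinearMap.sub_apply, Module.End.mul_apply, map_add, hD _ _ _, hTs,
      smul_sub]
    abel
  obtain ⟨g1, h1⟩ := wedge_mem _ _ hTm hR v
  obtain ⟨g2, h2⟩ := wedge_mem _ _ hTm hd v
  obtain ⟨g3, h3⟩ := wedge_mem _ _ hTm (wedge_mem _ _ hTm hTm) v
  have hquad : ∀ t : ℝ, trR C (wedge (fun w : Fin 1 → L => T (w 0))
      (wpow (curv2 (D + t • T)) 1) v) = LinearMap.trace C E g1 + t • LinearMap.trace C E g2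
        + t ^ 2 • LinearMap.trace C E g3 := by
    intro t
    have hw : wedge (fun w : Fin 1 → L => T (w 0)) (wpow (curv2 (D + t • T)) 1) v
        = restrEndMap (g1 + t • g2 + t ^ 2 • g3) := by
      rw [wpow_one, funext (curv_expand D T t)]
      refine (wedge_add_right _ _ _ _).trans ?_
      rw [wedge_add_right, wedge_smul_right]
      refine (congrArg _ (wedge_smul_right _ _ _ _)).trans ?_
      rw [map_add, map_add, map_smul, map_smul, h1, h2, h3]
    rw [hw, trR_restr]
    simp only [map_add, LinearMap.map_smul_of_tower]
  have hL : csPair C D (D + T) 2 v = (2 : ℝ) • (LinearMap.trace C E g1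
      + (1 / 2 : ℝ) • LinearMap.trace C E g2 + (1 / 3 : ℝ) • LinearMap.trace C E g3) := by
    unfold csPair
    rw [add_sub_cancel_left]
    refine (congrArg _ (intPoly_quad _ _ _ _ hquad)).trans ?_
    norm_num
  rw [hL]
  have hRt : (2 : ℝ) • wedge (fun w : Fin 1 → L => T (w 0)) (curv2 D) v
      + wedge (fun w : Fin 1 → L => T (w 0)) (dEnd D (fun w : Fin 1 → L => T (w 0))) v
      + (2 / 3 : ℝ) • wedge (fun w : Fin 1 → L => T (w 0))
        (wedge (fun w : Fin 1 → L => T (w 0)) (fun w : Fin 1 → L => T (w 0))) v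
      = restrEndMap ((2 : ℝ) • g1 + g2 + (2 / 3 : ℝ) • g3) := by
    rw [map_add, map_add, map_smul, map_smul, h1, h2, h3]
  refine Eq.trans ?_ (congrArg (trR C) hRt).symm
  rw [trR_restr]
  simp only [map_add, LinearMap.map_smul_of_tower, smul_add, smul_smul]
  norm_num
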